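/- arXiv:0903.2508 — 3 statements merged into one kernel-verified Lean document; each statement's English description precedes it below -/
import Mathlib

section
/- Fix reals ε > 0 and K > 0. There exists a constant C > 0 (depending only on ε and K) such that for every odd prime p and every integer H with 1 ≤ H ≤ (p−1)/2 and H ≤ K·p^{1/2}, the number of 8-tuples (x_1, x_2, y_1, y_2, u_1, u_2, v_1, v_2) of integers, each lying in the interval [−H, H], satisfying the congruence x_1 y_2 − x_2 y_1 ≡ u_1 v_2 − u_2 v_1 (mod p), is at most C·H^{6+ε}. -/
/-!
Put `I = [-H, H]` and write each side of the congruence as the determinant of a matrix with entries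
in `I`. A nonzero integer `m` has `O(H ^ ε)` factorizations `m = x y` with `x, y ∈ I` by the divisor
bound, while `0` has `O(H)` of them. For a given determinant `a d - b c = n`, fix `(b, c)`: the
product `a d` is then prescribed, and it is zero only for the `O(H)` pairs with `b c = -n`. So at
most `O(H ^ (2 + ε))` matrices with entries in `I` have determinant `n`, uniformly in `n`.

The difference of two such determinants is `O(H ^ 2) = O(p)`, so if `p` divides it, it takes one of
`O(1)` values. Once that value and the second matrix are fixed, the determinant of the first matrix
is prescribed, which gives `O(H ^ 4 * H ^ (2 + ε))` solutions.
-/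

open Finset

section DivisorBound

lemma succ_le_mul_pow {x : ℝ} (hx : 1 < x) (e : ℕ) : (e + 1 : ℝ) ≤ x / (x - 1) * x ^ e := by
  have bernoulli := one_add_mul_sub_le_pow (by linarith : -1 ≤ x) (e + 1)
  push_cast at bernoulli
  rw [div_mul_eq_mul_div, le_div_iff₀ (sub_pos.mpr hx), ← pow_succ']
  linarith

/-- The constant is only lost at the finitely many primes `q` with `q ^ δ < 2`. -/
lemma succ_le_ite_mul_rpow {δ : ℝ} (hδ : 0 < δ) {q : ℕ} (hq : 2 ≤ q) (e : ℕ) :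
    (e + 1 : ℝ) ≤ (if q < ⌈(2 : ℝ) ^ (1 / δ)⌉₊ then (2 : ℝ) ^ δ / (2 ^ δ - 1) else 1) *
      ((q : ℝ) ^ e) ^ δ := by
  have two_le_q : (2 : ℝ) ≤ q := by exact_mod_cast hq
  rw [← Real.rpow_pow_comm (by positivity)]
  split_ifs with hlt
  · have one_lt : 1 < (2 : ℝ) ^ δ := Real.one_lt_rpow one_lt_two hδ
    have : 0 ≤ (2 : ℝ) ^ δ / (2 ^ δ - 1) :=
      div_nonneg (by positivity) (sub_nonneg.mpr one_lt.le)
    exact (succ_le_mul_pow one_lt e).trans (by gcongr)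
  · have root_le : (2 : ℝ) ^ (1 / δ) ≤ q := Nat.ceil_le.mp (not_lt.mp hlt)
    have two_le : (2 : ℝ) ≤ (q : ℝ) ^ δ := by
      rwa [one_div, Real.rpow_inv_le_iff_of_pos (by positivity) (by positivity) hδ] at root_le
    calc (e + 1 : ℝ) ≤ 2 ^ e := by exact_mod_cast Nat.lt_two_pow_self
      _ ≤ 1 * ((q : ℝ) ^ δ) ^ e := by rw [one_mul]; gcongr

theorem exists_card_divisors_le_rpow {δ : ℝ} (hδ : 0 < δ) :
    ∃ D : ℝ, 0 < D ∧ ∀ n : ℕ, n ≠ 0 → (#n.divisors : ℝ) ≤ D * (n : ℝ) ^ δ := by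
  set A : ℝ := 2 ^ δ / (2 ^ δ - 1)
  set M : ℕ := ⌈(2 : ℝ) ^ (1 / δ)⌉₊
  have one_lt : 1 < (2 : ℝ) ^ δ := Real.one_lt_rpow one_lt_two hδ
  have one_le_A : 1 ≤ A := (one_le_div (sub_pos.mpr one_lt)).mpr (sub_le_self _ zero_le_one)
  refine ⟨A ^ M, by positivity, fun n hn ↦ ?_⟩
  have card_small : #{q ∈ n.primeFactors | q < M} ≤ M := by
    simpa using card_le_card (t := range M) fun q hq ↦ mem_range.mpr (mem_filter.mp hq).2
  have prod_pow : ∏ q ∈ n.primeFactors, (q : ℝ) ^ n.factorization q = n := by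
    exact_mod_cast n.prod_factorization_eq_prod_primeFactors (· ^ ·) ▸
      Nat.prod_factorization_pow_eq_self hn
  calc (#n.divisors : ℝ) = ∏ q ∈ n.primeFactors, (n.factorization q + 1 : ℝ) := by
        rw [Nat.card_divisors hn]; push_cast; rfl
    _ ≤ ∏ q ∈ n.primeFactors, (if q < M then A else 1) * ((q : ℝ) ^ n.factorization q) ^ δ :=
        prod_le_prod (fun _ _ ↦ by positivity) fun q hq ↦
          succ_le_ite_mul_rpow hδ (Nat.prime_of_mem_primeFactors hq).two_le _
    _ = A ^ #{q ∈ n.primeFactors | q < M} * (n : ℝ) ^ δ := by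
        rw [prod_mul_distrib, Real.finsetProd_rpow _ _ (fun _ _ ↦ by positivity), prod_pow,
          ← prod_filter, prod_const]
    _ ≤ A ^ M * (n : ℝ) ^ δ := by gcongr

end DivisorBound

section Factorizations

lemma card_divisorsAntidiag (m : ℤ) : #m.divisorsAntidiag = 2 * #m.natAbs.divisors := by
  cases m <;>
    simp only [Int.divisorsAntidiag, card_disjUnion, card_map, ← Nat.map_div_right_divisors,
      Int.natAbs_natCast, Int.ofNat_eq_natCast, Int.natAbs_negSucc, Nat.succ_eq_add_one, two_mul]

lemma card_filter_mul_eq_le {R : Type*} [Mul R] [Zero R] [IsLeftCancelMulZero R] [DecidableEq R]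
    (s t : Finset R) (m : R) : #{x ∈ s ×ˢ t | x.1 * x.2 = m} ≤ #s + #t := by
  set F := {x ∈ s ×ˢ t | x.1 * x.2 = m}
  have card_ne_zero : #{x ∈ F | x.1 ≠ 0} ≤ #s := by
    refine card_le_card_of_injOn Prod.fst (by simp +contextual [F, Set.MapsTo]) ?_
    rintro ⟨a, b⟩ hab ⟨_, d⟩ hcd rfl
    simp only [F, coe_filter, mem_filter, Set.mem_ofPred_eq] at hab hcd
    rw [mul_left_cancel₀ hab.2 (hab.1.2.trans hcd.1.2.symm)]
  have card_eq_zero : #{x ∈ F | ¬x.1 ≠ 0} ≤ #t := by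
    refine card_le_card_of_injOn Prod.snd (by simp +contextual [F, Set.MapsTo]) ?_
    rintro ⟨a, b⟩ hab ⟨c, _⟩ hcd rfl
    simp_all
  rw [← card_filter_add_card_filter_not (s := F) (fun x ↦ x.1 ≠ 0)]
  exact add_le_add card_ne_zero card_eq_zero

theorem exists_card_filter_mul_eq_le_rpow {ε : ℝ} (hε : 0 < ε) :
    ∃ D : ℝ, 0 < D ∧ ∀ (H : ℕ) (m : ℤ), m ≠ 0 →
      (#{x ∈ Icc (-H : ℤ) H ×ˢ Icc (-H : ℤ) H | x.1 * x.2 = m} : ℝ) ≤ D * (H : ℝ) ^ ε := by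
  obtain ⟨D, hD, card_divisors_le⟩ := exists_card_divisors_le_rpow (half_pos hε)
  refine ⟨2 * D, by positivity, fun H m hm ↦ ?_⟩
  set F := {x ∈ Icc (-H : ℤ) H ×ˢ Icc (-H : ℤ) H | x.1 * x.2 = m} with hF
  obtain hempty | ⟨x, hx⟩ := F.eq_empty_or_nonempty
  · simp only [hempty, card_empty, Nat.cast_zero]
    positivity
  have natAbs_le : (m.natAbs : ℝ) ≤ (H : ℝ) ^ 2 := by
    simp only [hF, mem_filter, mem_product, mem_Icc] at hx
    rw [← hx.2, Int.natAbs_mul, sq]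
    exact_mod_cast Nat.mul_le_mul (by omega : x.1.natAbs ≤ H) (by omega : x.2.natAbs ≤ H)
  have card_le : #F ≤ 2 * #m.natAbs.divisors := by
    rw [← card_divisorsAntidiag]
    exact card_le_card fun y hy ↦ Int.mem_divisorsAntidiag.mpr ⟨(mem_filter.mp hy).2, hm⟩
  calc (#F : ℝ) ≤ 2 * #m.natAbs.divisors := by exact_mod_cast card_le
    _ ≤ 2 * (D * (m.natAbs : ℝ) ^ (ε / 2)) := by
        gcongr; exact card_divisors_le _ (Int.natAbs_ne_zero.mpr hm)
    _ ≤ 2 * (D * ((H : ℝ) ^ 2) ^ (ε / 2)) := by gcongr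
    _ = 2 * D * (H : ℝ) ^ ε := by
        rw [← Real.rpow_natCast_mul (by positivity), Nat.cast_ofNat, mul_div_cancel₀ _ two_ne_zero,
          mul_assoc]

end Factorizations

section Determinants

lemma card_filter_sub_eq {α β G : Type*} [AddGroup G] [DecidableEq G] (s : Finset α)
    (t : Finset β) (f : α → G) (g : β → G) (n : G) :
    #{z ∈ s ×ˢ t | f z.1 - g z.2 = n} = ∑ b ∈ t, #{a ∈ s | f a = n + g b} := by
  simp only [card_filter, sum_product_right, sub_eq_iff_eq_add]

/-- The determinant `a d - b c` of a `2 × 2` matrix with rows `(a, b)` and `(c, d)`, encoded by its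
diagonals as `((a, d), (b, c))` so that each of the two products depends on one component. -/
def diagDet {R : Type*} [CommRing R] (z : (R × R) × (R × R)) : R :=
  z.1.1 * z.1.2 - z.2.1 * z.2.2

/-- The matrices with entries in `I`, encoded by their diagonals as in `diagDet`. -/
abbrev diagBox {R : Type*} (I : Finset R) : Finset ((R × R) × (R × R)) :=
  (I ×ˢ I) ×ˢ (I ×ˢ I)

theorem card_filter_diagDet_eq_le {R : Type*} [CommRing R] [IsDomain R] [DecidableEq R]
    (I : Finset R) (B : ℕ) (hB : ∀ m ≠ 0, #{x ∈ I ×ˢ I | x.1 * x.2 = m} ≤ B) (n : R) :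
    #{z ∈ diagBox I | diagDet z = n} ≤ #I ^ 2 * (B + 4) := by
  have fiber_le (y : R × R) : #{x ∈ I ×ˢ I | x.1 * x.2 = n + y.1 * y.2} ≤
      B + if y.1 * y.2 = -n then 2 * #I else 0 := by
    split_ifs with hy
    · rw [two_mul]
      exact (card_filter_mul_eq_le I I _).trans (Nat.le_add_left _ _)
    · exact hB _ fun h ↦ hy (eq_neg_of_add_eq_zero_right h)
  calc #{z ∈ diagBox I | diagDet z = n}
      = ∑ y ∈ I ×ˢ I, #{x ∈ I ×ˢ I | x.1 * x.2 = n + y.1 * y.2} := by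
        simp only [diagDet]
        exact card_filter_sub_eq _ _ (fun x : R × R ↦ x.1 * x.2) (fun y : R × R ↦ y.1 * y.2) n
    _ ≤ ∑ y ∈ I ×ˢ I, (B + if y.1 * y.2 = -n then 2 * #I else 0) :=
        sum_le_sum fun y _ ↦ fiber_le y
    _ = #I ^ 2 * B + #{y ∈ I ×ˢ I | y.1 * y.2 = -n} * (2 * #I) := by
        rw [sum_add_distrib, ← sum_filter, sum_const, sum_const, card_product, smul_eq_mul,
          smul_eq_mul, sq]
    _ ≤ #I ^ 2 * B + (#I + #I) * (2 * #I) := by gcongr; exact card_filter_mul_eq_le I I _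
    _ = #I ^ 2 * (B + 4) := by ring

end Determinants

section Congruence

lemma card_filter_dvd_le {α : Type*} (s : Finset α) (f : α → ℤ) {p M T : ℕ} (hp : p ≠ 0)
    (hf : ∀ a ∈ s, |f a| ≤ M * p) (hT : ∀ n, #{a ∈ s | f a = n} ≤ T) :
    #{a ∈ s | (p : ℤ) ∣ f a} ≤ T * (2 * M + 1) := by
  have hp' : (0 : ℤ) < p := by positivity
  have card_quotients : #(Icc (-M : ℤ) M) = 2 * M + 1 := by rw [Int.card_Icc]; omega
  rw [← card_quotients]
  refine card_le_mul_card_image_of_maps_to (f := fun a ↦ f a / p) (fun a ha ↦ ?_) T fun k _ ↦ ?_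
  · have hfa := abs_le.mp (hf a (mem_filter.mp ha).1)
    exact mem_Icc.mpr ⟨(Int.le_ediv_iff_mul_le hp').mpr (by linarith),
      Int.ediv_le_of_le_mul hp' hfa.2⟩
  · refine (card_le_card fun a ha ↦ ?_).trans (hT (p * k))
    simp only [mem_filter] at ha ⊢
    exact ⟨ha.1.1, by rw [← ha.2, Int.mul_ediv_cancel' ha.1.2]⟩

lemma abs_diagDet_le {H : ℕ} {z : (ℤ × ℤ) × (ℤ × ℤ)} (hz : z ∈ diagBox (Icc (-H : ℤ) H)) :
    |diagDet z| ≤ 2 * H ^ 2 := by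
  simp only [mem_product, mem_Icc, ← abs_le] at hz
  obtain ⟨⟨ha, hd⟩, hb, hc⟩ := hz
  calc |diagDet z| ≤ |z.1.1| * |z.1.2| + |z.2.1| * |z.2.2| := by
        rw [← abs_mul, ← abs_mul]; exact abs_sub _ _
    _ ≤ H * H + H * H := by gcongr
    _ = 2 * H ^ 2 := by ring

theorem card_filter_dvd_diagDet_sub_le {p H M B : ℕ} (hp : p ≠ 0) (hM : 4 * H ^ 2 ≤ M * p)
    (hB : ∀ m : ℤ, m ≠ 0 → #{x ∈ Icc (-H : ℤ) H ×ˢ Icc (-H : ℤ) H | x.1 * x.2 = m} ≤ B) :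
    #{z ∈ diagBox (Icc (-H : ℤ) H) ×ˢ diagBox (Icc (-H : ℤ) H) |
        (p : ℤ) ∣ diagDet z.1 - diagDet z.2} ≤
      (2 * H + 1) ^ 6 * (B + 4) * (2 * M + 1) := by
  set I := Icc (-H : ℤ) H
  have card_I : #I = 2 * H + 1 := by rw [Int.card_Icc]; omega
  refine card_filter_dvd_le _ _ hp (fun z hz ↦ ?_) fun n ↦ ?_
  · obtain ⟨hz₁, hz₂⟩ := mem_product.mp hz
    zify at hM
    linarith [abs_sub (diagDet z.1) (diagDet z.2), abs_diagDet_le hz₁, abs_diagDet_le hz₂]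
  · rw [card_filter_sub_eq]
    calc ∑ w ∈ diagBox I, #{z ∈ diagBox I | diagDet z = n + diagDet w}
        ≤ #(diagBox I) * (#I ^ 2 * (B + 4)) :=
          sum_le_card_nsmul _ _ _ fun w _ ↦ card_filter_diagDet_eq_le I B hB _
      _ = (2 * H + 1) ^ 6 * (B + 4) := by
          simp only [card_product, card_I]; ring

lemma natCard_modEq_le_card_filter (p : ℕ) (I : Finset ℤ) :
    Nat.card {v : Fin 8 → ℤ // (∀ i, v i ∈ I) ∧
        Int.ModEq (p : ℤ) (v 0 * v 3 - v 1 * v 2) (v 4 * v 7 - v 5 * v 6)} ≤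
      #{z ∈ diagBox I ×ˢ diagBox I | (p : ℤ) ∣ diagDet z.1 - diagDet z.2} := by
  rw [← Nat.card_eq_finsetCard]
  refine Nat.card_le_card_of_injective (fun v ↦
    ⟨(((v.1 0, v.1 3), v.1 1, v.1 2), (v.1 4, v.1 7), v.1 5, v.1 6), ?_⟩) fun v w hvw ↦ ?_
  · obtain ⟨v, hv, hmod⟩ := v
    exact mem_filter.mpr ⟨by simp [hv], hmod.symm.dvd⟩
  · simp only [Subtype.mk.injEq, Prod.mk.injEq] at hvw
    ext i
    fin_cases i <;> simp [hvw]

lemma four_mul_sq_le_ceil_mul {K : ℝ} {p H : ℕ} (hHK : (H : ℝ) ≤ K * (p : ℝ) ^ ((1 : ℝ) / 2)) :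
    4 * H ^ 2 ≤ ⌈4 * K ^ 2⌉₊ * p := by
  have : 4 * (H : ℝ) ^ 2 ≤ ⌈4 * K ^ 2⌉₊ * p := calc
    4 * (H : ℝ) ^ 2 ≤ 4 * (K * (p : ℝ) ^ ((1 : ℝ) / 2)) ^ 2 := by gcongr
    _ = 4 * K ^ 2 * p := by
      rw [mul_pow, ← Real.sqrt_eq_rpow, Real.sq_sqrt p.cast_nonneg, mul_assoc]
    _ ≤ ⌈4 * K ^ 2⌉₊ * p := by gcongr; exact Nat.le_ceil _
  exact_mod_cast this

end Congruence

theorem stmt_12_general (ε K : ℝ) (hε : 0 < ε) :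
    ∃ C : ℝ, 0 < C ∧
      ∀ p H : ℕ, 1 ≤ H → (H : ℝ) ≤ K * (p : ℝ) ^ ((1 : ℝ) / 2) →
        (Nat.card {v : Fin 8 → ℤ //
            (∀ i, v i ∈ Finset.Icc (-(H : ℤ)) (H : ℤ)) ∧
              Int.ModEq (p : ℤ) (v 0 * v 3 - v 1 * v 2) (v 4 * v 7 - v 5 * v 6)} : ℝ) ≤
          C * (H : ℝ) ^ ((6 : ℝ) + ε) := by
  obtain ⟨D, hD, card_mul_eq_le⟩ := exists_card_filter_mul_eq_le_rpow hε
  set M : ℕ := ⌈4 * K ^ 2⌉₊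
  refine ⟨3 ^ 6 * (D + 4) * (2 * M + 1), by positivity, fun p H hH hHK ↦ ?_⟩
  have one_le_H : (1 : ℝ) ≤ H := by exact_mod_cast hH
  have sq_le : 4 * H ^ 2 ≤ M * p := four_mul_sq_le_ceil_mul hHK
  have p_ne_zero : p ≠ 0 := by rintro rfl; nlinarith
  set B : ℕ := ⌊D * (H : ℝ) ^ ε⌋₊
  have B_le : (B : ℝ) ≤ D * (H : ℝ) ^ ε := Nat.floor_le (by positivity)
  have one_le_rpow : 1 ≤ (H : ℝ) ^ ε := Real.one_le_rpow one_le_H hε.le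
  have card_le := (natCard_modEq_le_card_filter p (Icc (-H : ℤ) H)).trans <|
    card_filter_dvd_diagDet_sub_le p_ne_zero sq_le fun m hm ↦ Nat.le_floor (card_mul_eq_le H m hm)
  calc _ ≤ (2 * H + 1 : ℝ) ^ 6 * (B + 4) * (2 * M + 1) := by exact_mod_cast card_le
    _ ≤ (2 * H + H : ℝ) ^ 6 * (D * (H : ℝ) ^ ε + 4 * (H : ℝ) ^ ε) * (2 * M + 1) := by
        gcongr; linarith
    _ = 3 ^ 6 * (D + 4) * (2 * M + 1) * ((H : ℝ) ^ 6 * (H : ℝ) ^ ε) := by ring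
    _ = 3 ^ 6 * (D + 4) * (2 * M + 1) * (H : ℝ) ^ ((6 : ℝ) + ε) := by
        rw [Real.rpow_add (by positivity)]; norm_cast

theorem stmt_12 (ε K : ℝ) (hε : 0 < ε) (hK : 0 < K) :
    ∃ C : ℝ, 0 < C ∧
      ∀ p : ℕ, p.Prime → Odd p →
        ∀ H : ℕ, 1 ≤ H → 2 * H + 1 ≤ p → (H : ℝ) ≤ K * (p : ℝ) ^ ((1 : ℝ) / 2) →
          (Nat.card {v : Fin 8 → ℤ //
              (∀ i, v i ∈ Finset.Icc (-(H : ℤ)) (H : ℤ)) ∧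
                Int.ModEq (p : ℤ) (v 0 * v 3 - v 1 * v 2) (v 4 * v 7 - v 5 * v 6)} : ℝ) ≤
            C * (H : ℝ) ^ ((6 : ℝ) + ε) := by
  obtain ⟨C, hC, card_le⟩ := stmt_12_general ε K hε
  exact ⟨C, hC, fun p _ _ H hH _ hHK ↦ card_le p H hH hHK⟩
end

section
/- Let q be a power of an odd prime and let A, B ⊆ F_q be subsets with |A|·|B| > q·(√q + 1). Then the product set A·B = {a·b : a ∈ A, b ∈ B} contains a nontrivial three-term arithmetic progression; that is, there exist u, v, w ∈ A·B with u + w = 2v, u ≠ v, and w ≠ v. -/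
open Pointwise

/-!
Fix a nonzero `c ∈ B`. A solution of `a * b + t * (c * a₁) = (1 + t) * (c * a₂)` with
`a, a₁, a₂ ∈ A` and `b ∈ B` is an incidence between the point `(b, (1 + t) * c * a₂)` and the line
of slope `a` and intercept `t * c * a₁`. If `A * B` contains only trivial solutions, then each
incidence is determined by `(a, b)`, so there are at most `|A| |B|` of them. On the other hand, two
distinct lines share at most one point, and a variance computation followed by Cauchy–Schwarz gives
Vinh's estimate `|I(P, L) - |P| |L| / q| ≤ √(q |P| |L|)`, here with `|P| = |A| |B|` points and
`|L| = |A|²` lines. When `|B| ≤ |A|` this forces more than `|A|² ≥ |A| |B|` incidences.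
Three-term progressions are the case `t = 1`.
-/

open Finset

section SetFamily

variable {α ι : Type*} [DecidableEq α] (s : ι → Finset α) (L : Finset ι)

lemma sum_card_filter_mem_eq_sum_card_inter (P : Finset α) :
    ∑ p ∈ P, #{i ∈ L | p ∈ s i} = ∑ i ∈ L, #(P ∩ s i) := by
  simp only [← filter_mem_eq_inter]
  exact sum_card_bipartiteAbove_eq_sum_card_bipartiteBelow fun p i ↦ p ∈ s i

variable [Fintype α]

lemma sum_card_filter_mem_sq_eq_sum_card_inter :
    ∑ p, #{i ∈ L | p ∈ s i} ^ 2 = ∑ i ∈ L, ∑ j ∈ L, #(s i ∩ s j) := by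
  have hsq (p : α) : #{i ∈ L | p ∈ s i} ^ 2 = #{x ∈ L ×ˢ L | p ∈ s x.1 ∩ s x.2} := by
    simp only [sq, ← card_product, ← filter_product, mem_inter]
  simp only [hsq, sum_card_filter_mem_eq_sum_card_inter (fun x : ι × ι ↦ s x.1 ∩ s x.2),
    univ_inter, sum_product]

variable {s L} {k : ℕ}

lemma sum_card_inter_le_of_uniform [Nonempty α] (hcard : ∀ i ∈ L, #(s i) = k)
    (hinter : ∀ i ∈ L, ∀ j ∈ L, i ≠ j → #(s i ∩ s j) * Fintype.card α ≤ k ^ 2) :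
    ∑ i ∈ L, ∑ j ∈ L, (#(s i ∩ s j) : ℝ) ≤ k * #L + (k * #L) ^ 2 / Fintype.card α := by
  classical
  have hpair : ∀ i ∈ L, ∀ j ∈ L,
      (#(s i ∩ s j) : ℝ) ≤ (if i = j then (k : ℝ) else 0) + (k : ℝ) ^ 2 / Fintype.card α := by
    intro i hi j hj
    split_ifs with hij
    · rw [hij, inter_self, hcard j hj]
      exact le_add_of_nonneg_right (by positivity)
    · rw [zero_add, le_div_iff₀ (by positivity)]
      exact_mod_cast hinter i hi j hj hij
  calc
    ∑ i ∈ L, ∑ j ∈ L, (#(s i ∩ s j) : ℝ)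
      ≤ ∑ i ∈ L, ∑ j ∈ L, ((if i = j then (k : ℝ) else 0) + (k : ℝ) ^ 2 / Fintype.card α) :=
        sum_le_sum fun i hi ↦ sum_le_sum fun j hj ↦ hpair i hi j hj
    _ = k * #L + (k * #L) ^ 2 / Fintype.card α := by
        simp only [sum_add_distrib, sum_ite_eq, sum_ite_mem, inter_self, sum_const, nsmul_eq_mul]
        ring

lemma sum_card_filter_mem_sub_mean_sq_le [Nonempty α] (hcard : ∀ i ∈ L, #(s i) = k)
    (hinter : ∀ i ∈ L, ∀ j ∈ L, i ≠ j → #(s i ∩ s j) * Fintype.card α ≤ k ^ 2) :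
    ∑ p, ((#{i ∈ L | p ∈ s i} : ℝ) - k * #L / Fintype.card α) ^ 2 ≤ k * #L := by
  have hfirst : ∑ p, (#{i ∈ L | p ∈ s i} : ℝ) = k * #L := by
    have hsum := sum_card_filter_mem_eq_sum_card_inter s L univ
    simp only [univ_inter, sum_congr rfl hcard, sum_const, smul_eq_mul] at hsum
    rw [mul_comm]
    exact_mod_cast hsum
  have hsecond : ∑ p, (#{i ∈ L | p ∈ s i} : ℝ) ^ 2 = ∑ i ∈ L, ∑ j ∈ L, (#(s i ∩ s j) : ℝ) := by
    exact_mod_cast sum_card_filter_mem_sq_eq_sum_card_inter s L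
  calc
    ∑ p, ((#{i ∈ L | p ∈ s i} : ℝ) - k * #L / Fintype.card α) ^ 2
      = ∑ i ∈ L, ∑ j ∈ L, (#(s i ∩ s j) : ℝ) - (k * #L) ^ 2 / Fintype.card α := by
        simp only [sub_sq, sum_add_distrib, sum_sub_distrib, ← sum_mul, ← mul_sum, hfirst, hsecond,
          sum_const, card_univ, nsmul_eq_mul]
        field_simp
        ring
    _ ≤ k * #L := sub_le_iff_le_add.mpr (sum_card_inter_le_of_uniform hcard hinter)

-- `hinter` says that distinct blocks meet no more often than independent random sets of density
-- `k / |α|`, so the covariances in the second moment are nonpositive.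
theorem sq_sum_card_inter_sub_le [Nonempty α] (hcard : ∀ i ∈ L, #(s i) = k)
    (hinter : ∀ i ∈ L, ∀ j ∈ L, i ≠ j → #(s i ∩ s j) * Fintype.card α ≤ k ^ 2) (P : Finset α) :
    (∑ i ∈ L, (#(P ∩ s i) : ℝ) - k * #P * #L / Fintype.card α) ^ 2 ≤ k * #P * #L := by
  have hswap : ∑ i ∈ L, (#(P ∩ s i) : ℝ) = ∑ p ∈ P, (#{i ∈ L | p ∈ s i} : ℝ) := by
    exact_mod_cast (sum_card_filter_mem_eq_sum_card_inter s L P).symm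
  calc
    (∑ i ∈ L, (#(P ∩ s i) : ℝ) - k * #P * #L / Fintype.card α) ^ 2
      = (∑ p ∈ P, ((#{i ∈ L | p ∈ s i} : ℝ) - k * #L / Fintype.card α)) ^ 2 := by
        rw [hswap, sum_sub_distrib, sum_const, nsmul_eq_mul]
        ring
    _ ≤ #P * ∑ p ∈ P, ((#{i ∈ L | p ∈ s i} : ℝ) - k * #L / Fintype.card α) ^ 2 :=
        sq_sum_le_card_mul_sum_sq
    _ ≤ #P * ∑ p, ((#{i ∈ L | p ∈ s i} : ℝ) - k * #L / Fintype.card α) ^ 2 := by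
        gcongr
        exact subset_univ P
    _ ≤ #P * (k * #L) := by
        gcongr
        exact sum_card_filter_mem_sub_mean_sq_le hcard hinter
    _ = k * #P * #L := by ring

end SetFamily

section Lines

variable {F : Type*} [Field F] [Fintype F] [DecidableEq F]

/-- The non-vertical affine line in `F × F` with slope `ℓ.1` and intercept `ℓ.2`. -/
def affineLine (ℓ : F × F) : Finset (F × F) := {p | p.2 = ℓ.1 * p.1 + ℓ.2}

lemma mem_affineLine {ℓ p : F × F} : p ∈ affineLine ℓ ↔ p.2 = ℓ.1 * p.1 + ℓ.2 := by
  simp [affineLine]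

lemma card_affineLine (ℓ : F × F) : #(affineLine ℓ) = Fintype.card F := by
  have himage : affineLine ℓ = univ.image fun x ↦ (x, ℓ.1 * x + ℓ.2) := by
    ext ⟨x, y⟩
    simp [mem_affineLine, eq_comm]
  rw [himage, card_image_of_injective _ fun x y hxy ↦ congrArg Prod.fst hxy, card_univ]

lemma card_affineLine_inter_le_one {ℓ ℓ' : F × F} (hne : ℓ ≠ ℓ') :
    #(affineLine ℓ ∩ affineLine ℓ') ≤ 1 := by
  refine card_le_one.mpr fun p hp p' hp' ↦ ?_
  simp only [mem_inter, mem_affineLine] at hp hp'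
  have hslope : ℓ.1 ≠ ℓ'.1 := fun heq ↦
    hne <| Prod.ext heq <| by linear_combination hp.2 - hp.1 - p.1 * heq
  have hfst : p.1 = p'.1 := mul_left_cancel₀ (sub_ne_zero.mpr hslope) <| by
    linear_combination hp.2 - hp.1 - hp'.2 + hp'.1
  exact Prod.ext hfst <| by linear_combination hp.1 - hp'.1 + ℓ.1 * hfst

/-- Vinh's point–line incidence bound. -/
theorem sq_sum_card_inter_affineLine_sub_le (P L : Finset (F × F)) :
    (∑ ℓ ∈ L, (#(P ∩ affineLine ℓ) : ℝ) - #P * #L / Fintype.card F) ^ 2 ≤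
      Fintype.card F * #P * #L := by
  have hbound := sq_sum_card_inter_sub_le (L := L) (fun ℓ _ ↦ card_affineLine ℓ)
    (fun ℓ _ ℓ' _ hne ↦ by
      rw [Fintype.card_prod, ← sq]
      exact mul_le_of_le_one_left (Nat.zero_le _) (card_affineLine_inter_le_one hne)) P
  have hmean : (Fintype.card F : ℝ) * #P * #L / Fintype.card (F × F) =
      #P * #L / Fintype.card F := by
    rw [Fintype.card_prod]
    push_cast
    field_simp
  rwa [hmean] at hbound

lemma card_lt_sum_card_inter_affineLine {P L : Finset (F × F)} (hPL : #P ≤ #L)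
    (hP : (Fintype.card F : ℝ) * (√(Fintype.card F) + 1) < #P) :
    #L < ∑ ℓ ∈ L, #(P ∩ affineLine ℓ) := by
  have hq : (0 : ℝ) < Fintype.card F := by positivity
  have hPL' : (#P : ℝ) ≤ #L := mod_cast hPL
  have hL : (0 : ℝ) < #L := by
    refine lt_of_lt_of_le (hP.trans_le' ?_) hPL'
    positivity
  have hmean : (√(Fintype.card F) + 1) * #L < #P * #L / Fintype.card F := by
    rw [lt_div_iff₀ hq]
    linear_combination (#L : ℝ) * hP
  have hdev : |∑ ℓ ∈ L, (#(P ∩ affineLine ℓ) : ℝ) - #P * #L / Fintype.card F| ≤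
      √(Fintype.card F) * #L := by
    refine abs_le_of_sq_le_sq ?_ (by positivity)
    calc
      _ ≤ (Fintype.card F : ℝ) * #P * #L := sq_sum_card_inter_affineLine_sub_le P L
      _ ≤ Fintype.card F * #L * #L := by gcongr
      _ = (√(Fintype.card F) * #L) ^ 2 := by
        rw [mul_pow, Real.sq_sqrt hq.le]
        ring
  have hlt : (#L : ℝ) < ∑ ℓ ∈ L, (#(P ∩ affineLine ℓ) : ℝ) := by
    linarith [(abs_le.mp hdev).1]
  exact_mod_cast hlt

lemma sum_card_inter_affineLine_le {A B C D : Finset F} (g : F → F → F)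
    (hg : ∀ ℓ ∈ A ×ˢ C, ∀ p ∈ B ×ˢ D, p ∈ affineLine ℓ → ℓ.2 = g ℓ.1 p.1) :
    ∑ ℓ ∈ A ×ˢ C, #((B ×ˢ D) ∩ affineLine ℓ) ≤ #A * #B := by
  rw [← card_sigma, ← card_product]
  refine card_le_card_of_injOn (fun x ↦ (x.1.1, x.2.1)) ?_ ?_
  · rintro ⟨ℓ, p⟩ hx
    simp only [coe_sigma, Set.mem_sigma_iff, mem_coe, mem_inter, mem_product] at hx ⊢
    exact ⟨hx.1.1, hx.2.1.1⟩
  · rintro ⟨⟨a, r⟩, b, y⟩ hx ⟨⟨a', r'⟩, b', y'⟩ hx' heq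
    simp only [coe_sigma, Set.mem_sigma_iff, mem_coe, mem_inter] at hx hx'
    obtain ⟨rfl, rfl⟩ : a = a' ∧ b = b' := Prod.mk.inj heq
    obtain rfl : r = r' :=
      (hg _ hx.1 _ hx.2.1 hx.2.2).trans (hg _ hx'.1 _ hx'.2.1 hx'.2.2).symm
    obtain rfl : y = y' := (mem_affineLine.mp hx.2.2).trans (mem_affineLine.mp hx'.2.2).symm
    rfl

end Lines

section ProductSet

lemma one_lt_card_of_card_lt_card_mul_card {α β : Type*} [Fintype α] {A : Finset α} {B : Finset β}
    (h : Fintype.card α < #A * #B) : 1 < #B := by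
  by_contra! hB
  exact h.not_ge <| (Nat.mul_le_mul (card_le_univ A) hB).trans_eq (mul_one _)

variable {F : Type*} [Field F] [Fintype F] [DecidableEq F] {A B : Finset F}

lemma exists_nontrivial_of_card_mul_card_lt_incidences {c : F} (hc : c ∈ B) (t : F)
    (hcount : #A * #B <
      ∑ ℓ ∈ A ×ˢ ((t * c) • A), #((B ×ˢ (((1 + t) * c) • A)) ∩ affineLine ℓ)) :
    ∃ u ∈ A * B, ∃ v ∈ A * B, ∃ w ∈ A * B, u + t * w = (1 + t) * v ∧ u ≠ v ∧ w ≠ v := by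
  by_contra! htrivial
  refine hcount.not_ge (sum_card_inter_affineLine_le (fun a b ↦ t * (a * b)) ?_)
  rintro ⟨a, r⟩ hℓ ⟨b, y⟩ hp hincident
  obtain ⟨ha, hr⟩ := mem_product.mp hℓ
  obtain ⟨hb, hy⟩ := mem_product.mp hp
  obtain ⟨a₁, ha₁, rfl⟩ := mem_smul_finset.mp hr
  obtain ⟨a₂, ha₂, rfl⟩ := mem_smul_finset.mp hy
  simp only [mem_affineLine, smul_eq_mul] at hincident ⊢
  have hsol : a * b + t * (a₁ * c) = (1 + t) * (a₂ * c) := by linear_combination -hincident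
  have huv : a * b = a₂ * c := by
    by_contra hne
    have hwv : a₁ * c = a₂ * c :=
      htrivial _ (mul_mem_mul ha hb) _ (mul_mem_mul ha₂ hc) _ (mul_mem_mul ha₁ hc) hsol hne
    exact hne <| by linear_combination hsol - t * hwv
  linear_combination hsol - (1 + t) * huv

theorem stmt_13_general {t : F} (ht : t ≠ 0) (ht' : 1 + t ≠ 0)
    (h : (Fintype.card F : ℝ) * (√(Fintype.card F) + 1) < #A * #B) :
    ∃ u ∈ A * B, ∃ v ∈ A * B, ∃ w ∈ A * B, u + t * w = (1 + t) * v ∧ u ≠ v ∧ w ≠ v := by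
  wlog hBA : #B ≤ #A generalizing A B
  · rw [mul_comm A B]
    exact this (by rwa [mul_comm (#B : ℝ)]) (le_of_not_ge hBA)
  have hcard : (Fintype.card F : ℝ) < #A * #B :=
    (le_mul_of_one_le_right (by positivity) (by simp)).trans_lt h
  obtain ⟨c, hcB, hc⟩ := exists_mem_ne (one_lt_card_of_card_lt_card_mul_card (mod_cast hcard)) 0
  refine exists_nontrivial_of_card_mul_card_lt_incidences hcB t ?_
  have hP : #(B ×ˢ (((1 + t) * c) • A)) = #A * #B := by
    rw [card_product, card_smul_finset₀ (mul_ne_zero ht' hc), mul_comm]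
  have hL : #(A ×ˢ ((t * c) • A)) = #A * #A := by
    rw [card_product, card_smul_finset₀ (mul_ne_zero ht hc)]
  have hPL : #(B ×ˢ (((1 + t) * c) • A)) ≤ #(A ×ˢ ((t * c) • A)) := by
    rw [hP, hL]
    exact Nat.mul_le_mul_left _ hBA
  exact (hP.symm.le.trans hPL).trans_lt <|
    card_lt_sum_card_inter_affineLine hPL (by rwa [hP, Nat.cast_mul])

end ProductSet

theorem stmt_13 (F : Type) [Field F] [Fintype F] [DecidableEq F]
    (hq : Odd (Fintype.card F)) (A B : Finset F)
    (h : (Fintype.card F : ℝ) * (Real.sqrt (Fintype.card F) + 1) <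
      (A.card : ℝ) * (B.card : ℝ)) :
    ∃ u ∈ A * B, ∃ v ∈ A * B, ∃ w ∈ A * B, u + w = 2 * v ∧ u ≠ v ∧ w ≠ v := by
  have hchar : ringChar F ≠ 2 := fun hchar ↦
    Nat.not_even_iff_odd.mpr hq (Nat.even_iff.mpr (FiniteField.even_card_of_char_two hchar))
  have htwo : (1 + 1 : F) ≠ 0 := by
    simpa only [one_add_one_eq_two] using Ring.two_ne_zero hchar
  simpa only [one_mul, one_add_one_eq_two] using stmt_13_general one_ne_zero htwo h
end

section
/- Let q be a power of an odd prime, let A, B ⊆ F_q be subsets, and let t ∈ F_q with t ≠ 0. Then the number of quadruples (x_0, y_0, x_2, y_2) ∈ A × B × A × B satisfying x_0·y_0 + x_2·y_2 = 2t is at least |A|²·|B|²/q − √q·|A|·|B|. -/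
/-!
Over a finite field with `q` elements and for `s ≠ 0`, attach to each linear functional `φ` on a
finite space `V` the function `u ↦ q · 1[φ u = s] - 1`. These functions are pairwise non-positively
correlated: as `s ≠ 0`, two distinct nonzero functionals that both take the value `s` at some point
are linearly independent, so the affine hyperplanes `φ = s` and `ψ = s` meet in either no point or
exactly `|V| / q²` points. Summing over a set `G` of functionals therefore gives a function with
square sum at most `q |V| |G|`, and Cauchy–Schwarz over a set `E ⊆ V` bounds the deviation of the
number of incidences `φ u = s` from `|E| |G| / q`. Identify `G` with a set of vectors through the
dot product and take `V = F²`, `E = A × A`, `G = B × B`.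
-/

open Finset Module

theorem sum_sq_sum_le_of_pairwise_sum_mul_nonpos {α ι R : Type*} [CommSemiring R] [PartialOrder R]
    [IsOrderedAddMonoid R] (S : Finset α) (G : Finset ι) (f : ι → α → R)
    (hf : (G : Set ι).Pairwise fun i j ↦ ∑ a ∈ S, f i a * f j a ≤ 0) :
    ∑ a ∈ S, (∑ i ∈ G, f i a) ^ 2 ≤ ∑ i ∈ G, ∑ a ∈ S, f i a ^ 2 := by
  classical
  calc ∑ a ∈ S, (∑ i ∈ G, f i a) ^ 2
      = ∑ i ∈ G, ∑ j ∈ G, ∑ a ∈ S, f i a * f j a := by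
        simp only [sq, sum_mul_sum]
        rw [sum_comm]
        exact sum_congr rfl fun i _ ↦ sum_comm
    _ ≤ ∑ i ∈ G, ∑ j ∈ G, if i = j then ∑ a ∈ S, f i a ^ 2 else 0 := by
        refine sum_le_sum fun i hi ↦ sum_le_sum fun j hj ↦ ?_
        split_ifs with hij
        · simp only [hij, sq, le_refl]
        · exact hf hi hj hij
    _ = ∑ i ∈ G, ∑ a ∈ S, f i a ^ 2 := by
        refine sum_congr rfl fun i hi ↦ ?_
        rw [sum_ite_eq, if_pos hi]

theorem card_fiber_mul_card_of_surjective {M N : Type*} [AddGroup M] [AddGroup N] [Fintype M]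
    [Fintype N] [DecidableEq N] {f : M →+ N} (hf : Function.Surjective f) (y : N) :
    #{x | f x = y} * Fintype.card N = Fintype.card M := by
  calc #{x | f x = y} * Fintype.card N
      = ∑ z : N, #{x | f x = z} := by
        simp only [AddMonoidHom.card_fiber_eq_of_mem_range f (hf _) (hf y), sum_const, card_univ,
          smul_eq_mul, mul_comm]
    _ = Fintype.card M := (card_eq_sum_card_fiberwise fun x _ ↦ mem_univ (f x)).symm

theorem prod_surjective_of_ne {F V : Type*} [Field F] [AddCommGroup V] [Module F V]
    {φ ψ : Dual F V} (hne : φ ≠ ψ) {u : V} (hu : φ u ≠ 0) (hψu : ψ u = φ u) :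
    Function.Surjective (φ.prod ψ) := by
  obtain ⟨w, hw⟩ : ∃ w, φ w ≠ ψ w := by simpa [LinearMap.ext_iff] using hne
  have hw' : φ w - ψ w ≠ 0 := sub_ne_zero.2 hw
  rintro ⟨a, b⟩
  refine ⟨((a - (a - b) / (φ w - ψ w) * φ w) / φ u) • u + ((a - b) / (φ w - ψ w)) • w,
    Prod.ext ?_ ?_⟩
  · simp [hu]
  · change ψ (_ + _) = b
    simp only [map_add, map_smul, smul_eq_mul, hψu, div_mul_cancel₀ _ hu]
    field_simp
    ring

section Hyperplanes

variable {F V : Type*} [Field F] [Fintype F] [DecidableEq F] [AddCommGroup V] [Module F V]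

/-- The indicator of the affine hyperplane `φ = s`, multiplied by `q = |F|` and with the constant
`1` subtracted, so that its sum over the whole space vanishes when `φ ≠ 0`. -/
def hyperplaneDeviation (s : F) (φ : Dual F V) (u : V) : ℝ :=
  Fintype.card F * (if φ u = s then 1 else 0) - 1

theorem sum_sum_hyperplaneDeviation (s : F) (E : Finset V) (G : Finset (Dual F V)) :
    ∑ u ∈ E, ∑ φ ∈ G, hyperplaneDeviation s φ u =
      Fintype.card F * #{p ∈ E ×ˢ G | p.2 p.1 = s} - (#E * #G : ℝ) := by
  rw [← sum_product']
  simp only [hyperplaneDeviation, sum_sub_distrib, ← mul_sum, sum_boole, sum_const, card_product,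
    nsmul_eq_mul, mul_one, Nat.cast_mul]

variable [Fintype V] {φ ψ : Dual F V} {s : F}

theorem card_hyperplane_mul_card (hφ : φ ≠ 0) (s : F) :
    #{u | φ u = s} * Fintype.card F = Fintype.card V :=
  card_fiber_mul_card_of_surjective (f := φ.toAddMonoidHom) (φ.surjective hφ) s

theorem card_hyperplane_inter_mul_card_sq_le (hs : s ≠ 0) (hne : φ ≠ ψ) :
    #{u | φ u = s ∧ ψ u = s} * Fintype.card F ^ 2 ≤ Fintype.card V := by
  obtain hempty | ⟨u, hu⟩ := ({u | φ u = s ∧ ψ u = s} : Finset V).eq_empty_or_nonempty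
  · simp [hempty]
  · obtain ⟨hφu, hψu⟩ : φ u = s ∧ ψ u = s := by simpa using hu
    have hsurj := prod_surjective_of_ne hne (hφu.trans_ne hs) (hψu.trans hφu.symm)
    have hcard := card_fiber_mul_card_of_surjective (f := (φ.prod ψ).toAddMonoidHom) hsurj (s, s)
    simpa [Prod.ext_iff, sq] using hcard.le

theorem sum_hyperplaneDeviation_mul (s : F) (φ ψ : Dual F V) :
    ∑ u, hyperplaneDeviation s φ u * hyperplaneDeviation s ψ u =
      (Fintype.card F : ℝ) ^ 2 * #{u | φ u = s ∧ ψ u = s} - Fintype.card F * #{u | φ u = s} -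
        Fintype.card F * #{u | ψ u = s} + Fintype.card V := by
  have hexpand (u : V) : hyperplaneDeviation s φ u * hyperplaneDeviation s ψ u =
      (Fintype.card F : ℝ) ^ 2 * (if φ u = s ∧ ψ u = s then 1 else 0) -
        Fintype.card F * (if φ u = s then 1 else 0) -
        Fintype.card F * (if ψ u = s then 1 else 0) + 1 := by
    simp only [hyperplaneDeviation, ite_and]
    split_ifs <;> ring
  simp only [hexpand, sum_add_distrib, sum_sub_distrib, ← mul_sum, sum_boole, sum_const, card_univ,
    nsmul_eq_mul, mul_one]

theorem sum_hyperplaneDeviation_mul_nonpos (hs : s ≠ 0) (hne : φ ≠ ψ) :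
    ∑ u, hyperplaneDeviation s φ u * hyperplaneDeviation s ψ u ≤ 0 := by
  have hcard {χ : Dual F V} (hχ : χ ≠ 0) :
      (#{u | χ u = s} : ℝ) * Fintype.card F = Fintype.card V :=
    mod_cast card_hyperplane_mul_card hχ s
  rw [sum_hyperplaneDeviation_mul]
  rcases eq_or_ne φ 0 with rfl | hφ
  · simp [hs.symm, ← hcard hne.symm, mul_comm]
  rcases eq_or_ne ψ 0 with rfl | hψ
  · simp [hs.symm, ← hcard hφ, mul_comm]
  have hinter : (#{u | φ u = s ∧ ψ u = s} : ℝ) * (Fintype.card F : ℝ) ^ 2 ≤ Fintype.card V :=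
    mod_cast card_hyperplane_inter_mul_card_sq_le hs hne
  linarith [hcard hφ, hcard hψ]

theorem sum_hyperplaneDeviation_sq_le (hs : s ≠ 0) (φ : Dual F V) :
    ∑ u, hyperplaneDeviation s φ u ^ 2 ≤ Fintype.card F * Fintype.card V := by
  have hF : (1 : ℝ) ≤ Fintype.card F := mod_cast Fintype.card_pos (α := F)
  simp only [sq, sum_hyperplaneDeviation_mul, and_self]
  rcases eq_or_ne φ 0 with rfl | hφ
  · simpa [hs.symm] using le_mul_of_one_le_left (Nat.cast_nonneg (Fintype.card V)) hF
  · have hcard : (#{u | φ u = s} : ℝ) * Fintype.card F = Fintype.card V :=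
      mod_cast card_hyperplane_mul_card hφ s
    rw [← hcard]
    linarith [mul_nonneg (Nat.cast_nonneg (α := ℝ) #{u | φ u = s}) (zero_le_one.trans hF)]

theorem sum_sq_sum_hyperplaneDeviation_le (hs : s ≠ 0) (G : Finset (Dual F V)) :
    ∑ u, (∑ φ ∈ G, hyperplaneDeviation s φ u) ^ 2 ≤
      #G * (Fintype.card F * Fintype.card V : ℝ) :=
  (sum_sq_sum_le_of_pairwise_sum_mul_nonpos univ G _ fun _ _ _ _ hne ↦
    sum_hyperplaneDeviation_mul_nonpos hs hne).trans <| by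
      simpa only [nsmul_eq_mul] using
        sum_le_card_nsmul G _ _ fun φ _ ↦ sum_hyperplaneDeviation_sq_le hs φ

theorem abs_card_incidences_sub_le (hs : s ≠ 0) (E : Finset V) (G : Finset (Dual F V)) :
    |(#{p ∈ E ×ˢ G | p.2 p.1 = s} : ℝ) - #E * #G / Fintype.card F| ≤
      √(Fintype.card V / Fintype.card F * (#E * #G)) := by
  have hF : (0 : ℝ) < Fintype.card F := mod_cast Fintype.card_pos
  have hsq : (Fintype.card F * #{p ∈ E ×ˢ G | p.2 p.1 = s} - (#E * #G : ℝ)) ^ 2 ≤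
      #E * (#G * (Fintype.card F * Fintype.card V)) := by
    rw [← sum_sum_hyperplaneDeviation]
    calc (∑ u ∈ E, ∑ φ ∈ G, hyperplaneDeviation s φ u) ^ 2
        ≤ #E * ∑ u ∈ E, (∑ φ ∈ G, hyperplaneDeviation s φ u) ^ 2 := sq_sum_le_card_mul_sum_sq
      _ ≤ #E * ∑ u, (∑ φ ∈ G, hyperplaneDeviation s φ u) ^ 2 := by
          gcongr
          exact subset_univ E
      _ ≤ #E * (#G * (Fintype.card F * Fintype.card V)) := by
          gcongr
          exact sum_sq_sum_hyperplaneDeviation_le hs G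
  refine Real.abs_le_sqrt ?_
  rw [sub_div' hF.ne', div_pow, div_le_iff₀ (by positivity), mul_comm (#_ : ℝ)]
  refine hsq.trans_eq ?_
  field_simp

end Hyperplanes

theorem abs_card_dotProduct_eq_sub_le {F ι : Type*} [Field F] [Fintype F] [DecidableEq F]
    [Fintype ι] {s : F} (hs : s ≠ 0) (E G : Finset (ι → F)) :
    |(#{p ∈ E ×ˢ G | p.1 ⬝ᵥ p.2 = s} : ℝ) - #E * #G / Fintype.card F| ≤
      √((Fintype.card F : ℝ) ^ Fintype.card ι / Fintype.card F * (#E * #G)) := by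
  classical
  let e : (ι → F) ↪ Dual F (ι → F) := (dotProductEquiv F ι).toEquiv.toEmbedding
  have hcount : #{p ∈ E ×ˢ G | p.1 ⬝ᵥ p.2 = s} = #{p ∈ E ×ˢ G.map e | p.2 p.1 = s} :=
    card_equiv ((Equiv.refl _).prodCongr (dotProductEquiv F ι).toEquiv) fun p ↦ by
      simp [e, dotProduct_comm]
  simpa [hcount] using abs_card_incidences_sub_le hs E (G.map e)

theorem natCard_mul_add_mul_eq_card_dotProduct_eq {R : Type*} [NonUnitalNonAssocSemiring R]
    [DecidableEq R] (A B : Finset R) (s : R) :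
    Nat.card {v : R × R × R × R //
        v.1 ∈ A ∧ v.2.1 ∈ B ∧ v.2.2.1 ∈ A ∧ v.2.2.2 ∈ B ∧
          v.1 * v.2.1 + v.2.2.1 * v.2.2.2 = s} =
      #{p ∈ Fintype.piFinset (fun _ : Fin 2 ↦ A) ×ˢ Fintype.piFinset (fun _ : Fin 2 ↦ B) |
        p.1 ⬝ᵥ p.2 = s} := by
  let e : R × R × R × R ≃ (Fin 2 → R) × (Fin 2 → R) :=
    { toFun v := (![v.1, v.2.2.1], ![v.2.1, v.2.2.2])
      invFun p := (p.1 0, p.2 0, p.1 1, p.2 1)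
      left_inv _ := rfl
      right_inv p := by ext i <;> fin_cases i <;> rfl }
  refine (Nat.card_congr (e.subtypeEquiv fun v ↦ ?_)).trans (Nat.subtype_card _ fun _ ↦ Iff.rfl)
  have he : e v = (![v.1, v.2.2.1], ![v.2.1, v.2.2.2]) := rfl
  simp only [he, mem_filter, mem_product, Fintype.mem_piFinset, Fin.forall_fin_two,
    Matrix.vec2_dotProduct, Matrix.cons_val_zero, Matrix.cons_val_one]
  tauto

theorem stmt_14_general {F : Type*} [Field F] [Fintype F] (A B : Finset F) {s : F} (hs : s ≠ 0) :
    (#A : ℝ) ^ 2 * (#B : ℝ) ^ 2 / Fintype.card F - √(Fintype.card F) * #A * #B ≤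
      Nat.card {v : F × F × F × F //
        v.1 ∈ A ∧ v.2.1 ∈ B ∧ v.2.2.1 ∈ A ∧ v.2.2.2 ∈ B ∧
          v.1 * v.2.1 + v.2.2.1 * v.2.2.2 = s} := by
  classical
  have hsqrt : √((Fintype.card F : ℝ) ^ 2 / Fintype.card F * ((#A : ℝ) ^ 2 * (#B : ℝ) ^ 2)) =
      √(Fintype.card F) * #A * #B := by
    rw [sq (Fintype.card F : ℝ), mul_self_div_self, ← mul_pow, Real.sqrt_mul (by positivity),
      Real.sqrt_sq (by positivity), mul_assoc]
  have hdev := abs_card_dotProduct_eq_sub_le hs (Fintype.piFinset fun _ : Fin 2 ↦ A)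
    (Fintype.piFinset fun _ : Fin 2 ↦ B)
  simp only [Fintype.card_piFinset_const, Fintype.card_fin, Nat.cast_pow, hsqrt] at hdev
  rw [natCard_mul_add_mul_eq_card_dotProduct_eq]
  linarith [(abs_le.1 hdev).1]

theorem two_ne_zero_of_odd_card {F : Type*} [Field F] [Fintype F] (hF : Odd (Fintype.card F)) :
    (2 : F) ≠ 0 :=
  Ring.two_ne_zero fun hchar ↦
    Nat.not_even_iff_odd.2 hF (Nat.even_iff.2 (FiniteField.even_card_of_char_two hchar))

theorem stmt_14 (F : Type) [Field F] [Fintype F]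
    (hq : Odd (Fintype.card F)) (A B : Finset F) (t : F) (ht : t ≠ 0) :
    (A.card : ℝ) ^ 2 * (B.card : ℝ) ^ 2 / (Fintype.card F : ℝ) -
        Real.sqrt (Fintype.card F) * (A.card : ℝ) * (B.card : ℝ) ≤
      (Nat.card {v : F × F × F × F //
        v.1 ∈ A ∧ v.2.1 ∈ B ∧ v.2.2.1 ∈ A ∧ v.2.2.2 ∈ B ∧
          v.1 * v.2.1 + v.2.2.1 * v.2.2.2 = 2 * t} : ℝ) :=
  stmt_14_general A B (mul_ne_zero (two_ne_zero_of_odd_card hq) ht)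
end
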